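/- arXiv:quant-ph/0305022 — 4 statements merged into one kernel-verified Lean document; each statement's English description precedes it below -/
import Mathlib

section
/- For all integers n and s with 1 ≤ s ≤ n, the number of ordered pairs (A, B) of s-element subsets of Fin n satisfying |A ∩ B| = 1 equals n · C(n−1, s−1) · C(n−s, s−1), where C(a, b) denotes the binomial coefficient. -/
/-!
Fix `A`. A set `B` is determined by its trace `A ∩ B`, an arbitrary subset of `A`, and by `B \ A`,
an arbitrary subset of `Aᶜ`, so prescribing the sizes of both parts gives a product of two binomial
coefficients. Summing over `A` gives `C(n, s) * s * C(n - s, s - 1)`, and absorption rewrites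
`C(n, s) * s` as `n * C(n - 1, s - 1)`.
-/

open Finset

theorem card_filter_prod_eq_sum {α β : Type*} [Fintype α] [Fintype β]
    (p : α → Prop) [DecidablePred p] (r : α → β → Prop) [∀ a, DecidablePred (r a)] :
    #{x : α × β | p x.1 ∧ r x.1 x.2} = ∑ a with p a, #{b | r a b} := by
  simp only [card_filter, Fintype.sum_prod_type, sum_filter, ite_and, sum_ite_irrel, sum_const_zero]

variable {α : Type*} [DecidableEq α]

theorem inter_union_eq_of_subset_of_disjoint {A C D : Finset α} (hC : C ⊆ A)
    (hD : Disjoint A D) : A ∩ (C ∪ D) = C := by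
  rw [inter_union_distrib_left, disjoint_iff_inter_eq_empty.1 hD, union_empty, inter_eq_right.2 hC]

theorem union_sdiff_eq_of_subset_of_disjoint {A C D : Finset α} (hC : C ⊆ A)
    (hD : Disjoint A D) : (C ∪ D) \ A = D := by
  rw [union_sdiff_distrib, sdiff_eq_empty_iff_subset.2 hC, empty_union, hD.symm.sdiff_eq_left]

variable [Fintype α]

theorem card_filter_card_inter_card_sdiff (A : Finset α) (k j : ℕ) :
    #{B | #(A ∩ B) = k ∧ #(B \ A) = j} = (#A).choose k * (#Aᶜ).choose j := by
  have mem_parts {C D : Finset α} : (C, D) ∈ powersetCard k A ×ˢ powersetCard j Aᶜ ↔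
      (C ⊆ A ∧ #C = k) ∧ Disjoint A D ∧ #D = j := by
    simp only [mem_product, mem_powersetCard, subset_compl_iff_disjoint_left]
  rw [← card_powersetCard, ← card_powersetCard, ← card_product]
  refine card_bij' (fun B _ ↦ (A ∩ B, B \ A)) (fun q _ ↦ q.1 ∪ q.2) ?_ ?_ ?_ ?_
  · intro B hB
    obtain ⟨hk, hj⟩ := (mem_filter_univ B).1 hB
    exact mem_parts.2 ⟨⟨inter_subset_left, hk⟩, disjoint_sdiff, hj⟩
  · rintro ⟨C, D⟩ hCD
    obtain ⟨⟨hC, hk⟩, hD, hj⟩ := mem_parts.1 hCD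
    rw [mem_filter_univ, inter_union_eq_of_subset_of_disjoint hC hD,
      union_sdiff_eq_of_subset_of_disjoint hC hD]
    exact ⟨hk, hj⟩
  · intro B _
    rw [inter_comm, union_comm, sdiff_union_inter]
  · rintro ⟨C, D⟩ hCD
    obtain ⟨⟨hC, -⟩, hD, -⟩ := mem_parts.1 hCD
    exact Prod.ext (inter_union_eq_of_subset_of_disjoint hC hD)
      (union_sdiff_eq_of_subset_of_disjoint hC hD)

theorem card_filter_card_and_card_inter (A : Finset α) (k j : ℕ) :
    #{B | #B = k + j ∧ #(A ∩ B) = k} = (#A).choose k * (Fintype.card α - #A).choose j := by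
  rw [← card_compl, ← card_filter_card_inter_card_sdiff]
  congr! 2 with B
  have : #(A ∩ B) + #(B \ A) = #B := by rw [inter_comm, card_inter_add_card_sdiff]
  lia

theorem stmt_0_general (s k j : ℕ) :
    #{p : Finset α × Finset α | #p.1 = s ∧ #p.2 = k + j ∧ #(p.1 ∩ p.2) = k} =
      (Fintype.card α).choose s * s.choose k * (Fintype.card α - s).choose j :=
  calc
    _ = ∑ A : Finset α with #A = s, #{B | #B = k + j ∧ #(A ∩ B) = k} :=
      card_filter_prod_eq_sum _ fun A B ↦ #B = k + j ∧ #(A ∩ B) = k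
    _ = ∑ A : Finset α with #A = s, s.choose k * (Fintype.card α - s).choose j :=
      sum_congr rfl fun A hA ↦ by
        rw [card_filter_card_and_card_inter, (mem_filter_univ A).1 hA]
    _ = _ := by
      rw [sum_const, univ_filter_card_eq, card_powersetCard, card_univ, smul_eq_mul, mul_assoc]

/-- For all integers `n` and `s` with `1 ≤ s ≤ n`, the number of ordered
pairs `(A, B)` of `s`-element subsets of `Fin n` with `|A ∩ B| = 1` equals
`n * C(n-1, s-1) * C(n-s, s-1)`. -/
theorem stmt_0 (n s : ℕ) (hs : 1 ≤ s) (hsn : s ≤ n) :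
    (Finset.univ.filter
        (fun p : Finset (Fin n) × Finset (Fin n) =>
          p.1.card = s ∧ p.2.card = s ∧ (p.1 ∩ p.2).card = 1)).card =
      n * Nat.choose (n - 1) (s - 1) * Nat.choose (n - s) (s - 1) := by
  have absorption : n * (n - 1).choose (s - 1) = n.choose s * s := by
    simpa only [Nat.sub_add_cancel hs, Nat.sub_add_cancel (hs.trans hsn)] using
      Nat.add_one_mul_choose_eq (n - 1) (s - 1)
  simpa [absorption, hs] using stmt_0_general (α := Fin n) s 1 (s - 1)
end

section
/- For every integer s ≥ 1, setting n = s², if A and B are chosen independently and uniformly at random among the s-element subsets of Fin n, then the probability that |A ∩ B| = 1 is at least 1/e; equivalently, n · C(n−1, s−1) · C(n−s, s−1) ≥ (1/Real.exp 1) · (C(n, s))². -/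
/-!
The identity `(m + 1 - k) * C(m + 1, k) = (m + 1) * C(m, k)` shows that raising the upper index by
one multiplies a binomial coefficient by `1 + k / (m + 1 - k) ≤ exp (k / (m + 1 - k))`. Going up
from `n - s` to `n - 1` takes `s - 1` such steps, so
`C(n - 1, s - 1) ≤ exp ((s - 1)² / (n - 2s + 2)) * C(n - s, s - 1)`.
As `n * C(n - 1, s - 1) = s * C(n, s)`, the probability that `|A ∩ B| = 1` is
`(s² / n) * C(n - s, s - 1) / C(n - 1, s - 1)`, hence at least
`(s² / n) * exp (-(s - 1)² / (n - 2s + 2))`.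
For `n = s²` the prefactor is `1` and the exponent is greater than `-1`.
-/

lemma choose_succ_le_exp_mul_choose {m k : ℕ} (hk : k ≤ m) :
    ((m + 1).choose k : ℝ) ≤ Real.exp (k / (m + 1 - k)) * m.choose k := by
  have hkm : (k : ℝ) ≤ m := mod_cast hk
  have hpos : (0 : ℝ) < m + 1 - k := by linarith
  have hstep : (m.choose k : ℝ) * (m + 1) = (m + 1).choose k * (m + 1 - k) := by
    have h := congrArg (Nat.cast (R := ℝ)) (Nat.choose_mul_succ_eq m k)
    rw [Nat.cast_mul, Nat.cast_mul, Nat.cast_sub (by omega)] at h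
    exact_mod_cast h
  calc ((m + 1).choose k : ℝ) = (k / (m + 1 - k) + 1) * m.choose k := by
        field_simp
        linarith
    _ ≤ Real.exp (k / (m + 1 - k)) * m.choose k := by
        gcongr
        exact Real.add_one_le_exp _

lemma choose_add_le_exp_mul_choose {m k : ℕ} (hk : k ≤ m) (d : ℕ) :
    ((m + d).choose k : ℝ) ≤ Real.exp (d * k / (m + 1 - k)) * m.choose k := by
  have hkm : (k : ℝ) ≤ m := mod_cast hk
  have hpos : (0 : ℝ) < m + 1 - k := by linarith
  induction d with
  | zero => simp
  | succ d ih =>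
    calc ((m + d + 1).choose k : ℝ)
        ≤ Real.exp (k / ((m + d : ℕ) + 1 - k)) * (m + d).choose k :=
          choose_succ_le_exp_mul_choose (Nat.le_add_right_of_le hk)
      _ ≤ Real.exp (k / (m + 1 - k)) * (Real.exp (d * k / (m + 1 - k)) * m.choose k) := by
          gcongr
          exact Nat.le_add_right m d
      _ = Real.exp ((d + 1 : ℕ) * k / (m + 1 - k)) * m.choose k := by
          rw [← mul_assoc, ← Real.exp_add]
          push_cast
          ring_nf

theorem stmt_1_general {s n : ℕ} (hs : 1 ≤ s) (hn : 2 * s ≤ n + 1) :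
    (s : ℝ) ^ 2 / n * Real.exp (-((s - 1) ^ 2 / (n - 2 * s + 2))) * (n.choose s : ℝ) ^ 2 ≤
      ((n * (n - 1).choose (s - 1) * (n - s).choose (s - 1) : ℕ) : ℝ) := by
  have hn0 : (n : ℝ) ≠ 0 := Nat.cast_ne_zero.mpr (by omega)
  have habsorb : (n : ℝ) * (n - 1).choose (s - 1) = n.choose s * s := by
    have h := Nat.add_one_mul_choose_eq (n - 1) (s - 1)
    rw [Nat.sub_add_cancel hs, Nat.sub_add_cancel (by omega)] at h
    exact_mod_cast h
  have hsq : (s : ℝ) ^ 2 / n * (n.choose s : ℝ) ^ 2 = n * ((n - 1).choose (s - 1) : ℝ) ^ 2 := by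
    rw [div_mul_eq_mul_div, ← mul_pow, mul_comm (s : ℝ), ← habsorb]
    field_simp
  have hratio : ((n - 1).choose (s - 1) : ℝ) ≤
      Real.exp ((s - 1) ^ 2 / (n - 2 * s + 2)) * (n - s).choose (s - 1) := by
    have h := choose_add_le_exp_mul_choose (show s - 1 ≤ n - s by omega) (s - 1)
    rw [show n - s + (s - 1) = n - 1 by omega] at h
    rw [Nat.cast_sub hs, Nat.cast_sub (by omega)] at h
    convert h using 3
    push_cast
    ring
  calc (s : ℝ) ^ 2 / n * Real.exp (-((s - 1) ^ 2 / (n - 2 * s + 2))) * (n.choose s : ℝ) ^ 2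
      = n * (n - 1).choose (s - 1) *
          (Real.exp (-((s - 1) ^ 2 / (n - 2 * s + 2))) * (n - 1).choose (s - 1)) := by
        rw [mul_right_comm, hsq]
        ring
    _ ≤ n * (n - 1).choose (s - 1) * (n - s).choose (s - 1) := by
        gcongr
        rwa [Real.exp_neg, inv_mul_le_iff₀ (Real.exp_pos _)]
    _ = ((n * (n - 1).choose (s - 1) * (n - s).choose (s - 1) : ℕ) : ℝ) := by push_cast; rfl

/-- For every integer `s ≥ 1`, setting `n = s²`, if `A` and `B` are chosen
independently and uniformly at random among the `s`-element subsets of `Fin n`, then the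
probability that `|A ∩ B| = 1` is at least `1/e`; equivalently,
`n * C(n-1, s-1) * C(n-s, s-1) ≥ (1 / e) * C(n, s)²`. -/
theorem stmt_1 (s : ℕ) (hs : 1 ≤ s) (n : ℕ) (hn : n = s ^ 2) :
    ((n * Nat.choose (n - 1) (s - 1) * Nat.choose (n - s) (s - 1) : ℕ) : ℝ) ≥
      (1 / Real.exp 1) * ((Nat.choose n s : ℝ)) ^ 2 := by
  have hns : (n : ℝ) = (s : ℝ) ^ 2 := mod_cast hn
  have hn0 : (n : ℝ) ≠ 0 := by rw [hns]; positivity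
  have hexponent : ((s : ℝ) - 1) ^ 2 / (n - 2 * s + 2) ≤ 1 :=
    div_le_one_of_le₀ (by nlinarith) (by nlinarith [sq_nonneg ((s : ℝ) - 1)])
  refine le_trans ?_ (stmt_1_general hs (by nlinarith [two_mul_le_add_sq s 1]))
  rw [← hns, div_self hn0, one_mul, one_div, ← Real.exp_neg]
  gcongr
end

section
/- Let n, N ≥ 1 be integers, let λ be a real number with 0 < λ ≤ 1/2, and let E : (Fin n → ZMod 2) →ₗ[ZMod 2] (Fin N → ZMod 2) be a linear map such that every nonzero z satisfies hammingNorm (E z) ≥ λ · N. Then for all x, y : Fin n → ZMod 2 with x ≠ y, (1/N) · Σ_{i : Fin N} (−1)^{((E x) i).val} · (−1)^{((E y) i).val} ≤ 1 − 2λ, while for x = y this normalized sum equals 1. -/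
section HammingDist

variable {ι : Type*} [Fintype ι] {β : ι → Type*} [∀ i, AddGroup (β i)] [∀ i, DecidableEq (β i)]
    {G F : Type*} [AddGroup G] [FunLike F G (∀ i, β i)]
    [AddMonoidHomClass F G (∀ i, β i)]

lemma hammingDist_map_eq_hammingNorm_map (f : F) (x y : G) :
    hammingDist (f x) (f y) = hammingNorm (f (-x + y)) := by
  rw [hammingDist_eq_hammingNorm, map_add, map_neg]

lemma pairwise_le_hammingDist_map {R : Type*} [NatCast R] [LE R] {f : F} {d : R}
    (hf : ∀ z, z ≠ 0 → d ≤ hammingNorm (f z)) :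
    Pairwise fun x y ↦ d ≤ hammingDist (f x) (f y) := by
  intro x y hxy
  rw [hammingDist_map_eq_hammingNorm_map]
  exact hf _ (neg_add_eq_zero.not.mpr hxy)

end HammingDist

section SignVectors

lemma neg_one_pow_val_mul_neg_one_pow_val {R : Type*} [Ring R] (a b : ZMod 2) :
    (-1 : R) ^ a.val * (-1 : R) ^ b.val = if a = b then 1 else -1 := by
  have eq_zero_or_one : ∀ c : ZMod 2, c = 0 ∨ c = 1 := by decide
  rcases eq_zero_or_one a with rfl | rfl <;> rcases eq_zero_or_one b with rfl | rfl <;>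
    simp [ZMod.val_one]

variable {ι : Type*} [Fintype ι]

lemma sum_neg_one_pow_val_mul_neg_one_pow_val {R : Type*} [Ring R] (u v : ι → ZMod 2) :
    ∑ i, (-1 : R) ^ (u i).val * (-1 : R) ^ (v i).val =
      Fintype.card ι - 2 * hammingDist u v := by
  have term_eq (i : ι) : (-1 : R) ^ (u i).val * (-1 : R) ^ (v i).val =
      1 - 2 * if u i ≠ v i then 1 else 0 := by
    rw [neg_one_pow_val_mul_neg_one_pow_val, ite_not]
    split_ifs <;> norm_num
  simp only [term_eq, Finset.sum_sub_distrib, ← Finset.mul_sum, Finset.sum_boole,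
    Finset.sum_const, Finset.card_univ, nsmul_one, hammingDist]

lemma normalized_sum_neg_one_pow_val_mul_neg_one_pow_val {K : Type*} [Field K] [CharZero K]
    [Nonempty ι] (u v : ι → ZMod 2) :
    1 / (Fintype.card ι : K) * ∑ i, (-1 : K) ^ (u i).val * (-1 : K) ^ (v i).val =
      1 - 2 * (hammingDist u v / Fintype.card ι) := by
  have card_ne_zero : (Fintype.card ι : K) ≠ 0 := Nat.cast_ne_zero.mpr Fintype.card_ne_zero
  rw [sum_neg_one_pow_val_mul_neg_one_pow_val]
  field_simp

theorem stmt_10_general {α K : Type*} [Field K] [LinearOrder K] [IsStrictOrderedRing K]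
    [Nonempty ι] {μ : K} {E : α → ι → ZMod 2}
    (hE : Pairwise fun x y ↦ μ * Fintype.card ι ≤ hammingDist (E x) (E y)) :
    (∀ x y, x ≠ y →
        1 / (Fintype.card ι : K) * ∑ i, (-1 : K) ^ (E x i).val * (-1 : K) ^ (E y i).val ≤
          1 - 2 * μ) ∧
      ∀ x, 1 / (Fintype.card ι : K) *
        ∑ i, (-1 : K) ^ (E x i).val * (-1 : K) ^ (E x i).val = 1 := by
  simp only [normalized_sum_neg_one_pow_val_mul_neg_one_pow_val]
  refine ⟨fun x y hxy ↦ ?_, fun x ↦ by simp⟩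
  have card_pos : (0 : K) < Fintype.card ι := Nat.cast_pos.mpr Fintype.card_pos
  have relative_dist : μ ≤ hammingDist (E x) (E y) / Fintype.card ι :=
    (le_div_iff₀ card_pos).mpr (hE hxy)
  linarith

end SignVectors

/-- Let `n, N ≥ 1`, let `μ` be a real with `0 < μ ≤ 1/2`, and let
`E : (Fin n → ZMod 2) →ₗ[ZMod 2] (Fin N → ZMod 2)` be a linear code such that every
nonzero `z` satisfies `hammingNorm (E z) ≥ μ * N`. Then for all `x ≠ y`,
`(1/N) * Σ_i (-1)^((E x) i).val * (-1)^((E y) i).val ≤ 1 - 2μ`, while for `x = y` this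
normalized sum equals `1`. -/
theorem stmt_10 (n N : ℕ) (hn : 1 ≤ n) (hN : 1 ≤ N) (μ : ℝ) (hμ0 : 0 < μ)
    (hμ2 : μ ≤ 1 / 2)
    (E : (Fin n → ZMod 2) →ₗ[ZMod 2] (Fin N → ZMod 2))
    (hE : ∀ z : Fin n → ZMod 2, z ≠ 0 → (hammingNorm (E z) : ℝ) ≥ μ * N) :
    (∀ x y : Fin n → ZMod 2, x ≠ y →
        (1 / (N : ℝ)) * ∑ i : Fin N, (-1 : ℝ) ^ (E x i).val * (-1 : ℝ) ^ (E y i).val ≤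
          1 - 2 * μ) ∧
      ∀ x : Fin n → ZMod 2,
        (1 / (N : ℝ)) * ∑ i : Fin N, (-1 : ℝ) ^ (E x i).val * (-1 : ℝ) ^ (E x i).val = 1 := by
  have : Nonempty (Fin N) := Fin.pos_iff_nonempty.mp hN
  have min_dist : Pairwise fun x y ↦ μ * Fintype.card (Fin N) ≤ hammingDist (E x) (E y) :=
    pairwise_le_hammingDist_map (by simpa only [Fintype.card_fin] using hE)
  simpa only [Fintype.card_fin] using stmt_10_general min_dist
end

section
/- There is a constant c > 0 such that for all integers k ≥ 2 and s ≥ 2, setting n = s^k and t = s^{k−1}, if A_1, …, A_k are chosen independently and uniformly at random among the t-element subsets of Fin n, then the probability that |A_1 ∩ A_2 ∩ ⋯ ∩ A_k| = 1 is at least c; equivalently, the number of k-tuples (A_1, …, A_k) of t-element subsets of Fin n whose common intersection has exactly one element is at least c · (C(n, t))^k. -/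
/-!
Deleting the common point shows that the `k`-tuples of `t`-sets meeting in exactly one point of an
`n`-set are `n` times as many as the `k`-tuples of `(t - 1)`-sets with empty intersection in an
`(n - 1)`-set, and `n * C(n - 1, t - 1) ^ k = C(n, t) ^ k` because `n / t = s` and `n = s ^ k`. So
it suffices that `k` random `(t - 1)`-sets in an `(n - 1)`-set have empty intersection with
probability at least `1 / 4`. If the first `k - 1` of them meet in `b` points, the last one avoids
these points for `C(n - 1 - b, t - 1)` of its choices. Since the mean of `b` is at most `s`,
Jensen's inequality for the convex nondecreasing function `x ↦ C(x, t - 1)` reduces the claim to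
`C(n - 1 - s, t - 1) ≥ (1 - 1 / s) ^ s * C(n - 1, t - 1)`, and `(1 - 1 / s) ^ s ≥ 1 / 4`.
-/

open Finset

section Choose

theorem card_mul_choose_le_sum_choose {ι : Type*} (S : Finset ι) (p : ι → ℕ) {a : ℕ} (m : ℕ)
    (ha : #S * a ≤ ∑ i ∈ S, p i) : #S * a.choose m ≤ ∑ i ∈ S, (p i).choose m := by
  rcases S.eq_empty_or_nonempty with rfl | hS
  · simp
  rcases eq_or_ne m 0 with rfl | hm
  · simp
  rcases lt_or_ge a m with ham | ham
  · simp [Nat.choose_eq_zero_of_lt ham]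
  have hS_pos : (0 : ℝ) < #S := by exact_mod_cast hS.card_pos
  have ha_mean : (a : ℝ) ≤ ∑ i ∈ S, (#S : ℝ)⁻¹ * p i := by
    rw [← mul_sum, le_inv_mul_iff₀ hS_pos]
    exact_mod_cast ha
  have hma : (m : ℝ) - 1 ≤ a := by
    have : (m : ℝ) ≤ a := by exact_mod_cast ham
    linarith
  have h_jensen : (a.choose m : ℝ) ≤ ∑ i ∈ S, (#S : ℝ)⁻¹ * (p i).choose m := calc
    (a.choose m : ℝ) = (descPochhammer ℝ m).eval (a : ℝ) / m.factorial :=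
      Nat.cast_choose_eq_descPochhammer_div ℝ a m
    _ ≤ (descPochhammer ℝ m).eval (∑ i ∈ S, (#S : ℝ)⁻¹ * p i) / m.factorial := by
      gcongr
      exact monotoneOn_descPochhammer_eval m hma (hma.trans ha_mean) ha_mean
    _ ≤ ∑ i ∈ S, (#S : ℝ)⁻¹ * (p i).choose m :=
      descPochhammer_eval_div_factorial_le_sum_choose hm p _ (fun _ _ ↦ by positivity)
        (by simp [hS_pos.ne']) (hma.trans ha_mean)
  rw [← mul_sum, le_inv_mul_iff₀ hS_pos] at h_jensen
  exact_mod_cast h_jensen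

theorem mul_choose_le_choose_succ_succ {s N m : ℕ} (h : s * (m + 1) ≤ N + 1) :
    s * N.choose m ≤ (N + 1).choose (m + 1) := by
  refine Nat.le_of_mul_le_mul_right ?_ m.succ_pos
  calc s * N.choose m * (m + 1) = s * (m + 1) * N.choose m := by ring
    _ ≤ (N + 1) * N.choose m := by gcongr
    _ = (N + 1).choose (m + 1) * (m + 1) := Nat.add_one_mul_choose_eq N m

theorem choose_succ_succ_eq_mul_choose {s N m : ℕ} (h : N + 1 = s * (m + 1)) :
    (N + 1).choose (m + 1) = s * N.choose m := by
  refine Nat.eq_of_mul_eq_mul_right m.succ_pos ?_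
  rw [← Nat.add_one_mul_choose_eq, h, Nat.succ_eq_add_one]
  ring

theorem one_sub_div_mul_choose_succ (N m : ℕ) :
    (1 - m / (N + 1) : ℝ) * (N + 1).choose m = N.choose m := by
  rcases le_or_gt m (N + 1) with hm | hm
  · have h : (N.choose m : ℝ) * (N + 1) = (N + 1).choose m * (N + 1 - m) := by
      have := Nat.choose_mul_succ_eq N m
      rw [← Nat.cast_add_one, ← Nat.cast_sub hm]
      exact_mod_cast this
    field_simp
    linarith
  · simp [Nat.choose_eq_zero_of_lt hm, Nat.choose_eq_zero_of_lt (Nat.lt_of_succ_lt hm)]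

theorem one_sub_div_pow_mul_choose_add_le {N m : ℕ} (hm : m ≤ N + 1) (j : ℕ) :
    (1 - m / (N + 1) : ℝ) ^ j * (N + j).choose m ≤ N.choose m := by
  have h_nonneg : (0 : ℝ) ≤ 1 - m / (N + 1) := by
    rw [sub_nonneg, div_le_one (by positivity)]
    exact_mod_cast hm
  induction j with
  | zero => simp
  | succ j ih =>
    calc (1 - m / (N + 1) : ℝ) ^ (j + 1) * (N + j + 1).choose m
        = (1 - m / (N + 1)) ^ j * ((1 - m / (N + 1)) * (N + j + 1).choose m) := by ring
      _ ≤ (1 - m / (N + 1)) ^ j * ((1 - m / ((N + j : ℕ) + 1)) * (N + j + 1).choose m) := by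
        gcongr
        simp
      _ = (1 - m / (N + 1)) ^ j * (N + j).choose m := by rw [one_sub_div_mul_choose_succ]
      _ ≤ N.choose m := ih

theorem one_fourth_le_one_sub_inv_rpow {x : ℝ} (hx : 2 ≤ x) : 1 / 4 ≤ (1 - x⁻¹) ^ x := by
  have hx_inv : x⁻¹ ≤ 1 := inv_le_one_of_one_le₀ (by linarith)
  have h_bernoulli : 1 / 2 ≤ (1 - x⁻¹) ^ (x / 2) := by
    have h := one_add_mul_self_le_rpow_one_add (neg_le_neg hx_inv) (p := x / 2) (by linarith)
    rw [← sub_eq_add_neg] at h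
    convert h using 1
    field_simp
    norm_num
  calc (1 / 4 : ℝ) = (1 / 2) ^ 2 := by norm_num
    _ ≤ ((1 - x⁻¹) ^ (x / 2)) ^ 2 := by gcongr
    _ = (1 - x⁻¹) ^ x := by
      rw [← Real.rpow_mul_natCast (sub_nonneg.2 hx_inv), Nat.cast_ofNat,
        div_mul_cancel₀ x two_ne_zero]

theorem choose_add_le_four_mul_choose {s N m : ℕ} (hs : 2 ≤ s) (h : N + 1 = s * m) :
    (N + s).choose m ≤ 4 * N.choose m := by
  have hm : 0 < m := Nat.pos_of_ne_zero fun hm ↦ by simp [hm] at h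
  have h_ratio : (m / (N + 1) : ℝ) = (s : ℝ)⁻¹ := by
    have : (N + 1 : ℝ) = s * m := by exact_mod_cast h
    rw [this]
    field_simp
  have h_drop := one_sub_div_pow_mul_choose_add_le (h ▸ Nat.le_mul_of_pos_left m (by lia)) s
  rw [h_ratio, ← Real.rpow_natCast] at h_drop
  have h_quarter := one_fourth_le_one_sub_inv_rpow (x := s) (by exact_mod_cast hs)
  have h_real : ((N + s).choose m : ℝ) ≤ 4 * N.choose m := by
    linarith [mul_le_mul_of_nonneg_right h_quarter ((N + s).choose m).cast_nonneg]
  exact_mod_cast h_real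

end Choose

section AddPoint

variable {α : Type*} [DecidableEq α]

/-- Reinserts the deleted point `x` into a finite subset of its complement; this turns tuples with
empty intersection into tuples whose only common element is `x`. -/
def addPoint (x : α) (a : Finset {y // y ≠ x}) : Finset α :=
  insert x (a.map (.subtype _))

theorem addPoint_empty (x : α) : addPoint x ∅ = {x} := by
  simp [addPoint]

theorem card_addPoint (x : α) (a : Finset {y // y ≠ x}) : #(addPoint x a) = #a + 1 := by
  rw [addPoint, card_insert_of_notMem (by simp), card_map]

theorem addPoint_injective (x : α) : Function.Injective (addPoint x) := by
  refine Function.LeftInverse.injective (g := fun a ↦ a.subtype (· ≠ x)) fun a ↦ ?_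
  ext y
  simp [addPoint, y.2]

theorem exists_addPoint_eq {x : α} {a : Finset α} (hx : x ∈ a) : ∃ b, addPoint x b = a :=
  ⟨a.subtype (· ≠ x), by simp [addPoint, filter_ne', insert_erase hx]⟩

theorem inf_addPoint {ι : Type*} [Fintype ι] [Fintype α] (x : α) (A : ι → Finset {y // y ≠ x}) :
    univ.inf (fun i ↦ addPoint x (A i)) = addPoint x (univ.inf A) := by
  ext y
  by_cases hy : y = x <;> simp [mem_inf, addPoint, hy]

end AddPoint

section UniformTuples

variable {ι α : Type*} [Fintype ι] [DecidableEq ι] [Fintype α]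

variable (ι α) in
/-- The tuples `(A i)` indexed by `ι` of `t`-element subsets of `α`: the sample space of the random
experiment. -/
def uniformTuples (t : ℕ) : Finset (ι → Finset α) :=
  Fintype.piFinset fun _ ↦ powersetCard t univ

@[simp]
theorem mem_uniformTuples {t : ℕ} {A : ι → Finset α} :
    A ∈ uniformTuples ι α t ↔ ∀ i, #(A i) = t := by
  simp [uniformTuples]

theorem card_uniformTuples (t : ℕ) :
    #(uniformTuples ι α t) = (Fintype.card α).choose t ^ Fintype.card ι := by
  simp [uniformTuples, Fintype.card_piFinset]

variable [DecidableEq α]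

theorem card_uniformTuples_mem_inf (x : α) (t : ℕ) :
    #{A ∈ uniformTuples ι α (t + 1) | x ∈ univ.inf A} =
      (Fintype.card α - 1).choose t ^ Fintype.card ι := by
  have h_pi : {A ∈ uniformTuples ι α (t + 1) | x ∈ univ.inf A} =
      Fintype.piFinset fun _ ↦ {a ∈ powersetCard (t + 1) univ | {x} ⊆ a} := by
    ext A
    simp [mem_inf, forall_and]
  rw [h_pi, Fintype.card_piFinset, prod_const,
    card_filter_powersetCard_subset {x} univ (t + 1) (subset_univ _) (by simp)]
  simp

theorem sum_card_inf_uniformTuples (t : ℕ) :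
    ∑ A ∈ uniformTuples ι α (t + 1), #(univ.inf A) =
      Fintype.card α * (Fintype.card α - 1).choose t ^ Fintype.card ι := by
  have h := sum_card_bipartiteAbove_eq_sum_card_bipartiteBelow (s := uniformTuples ι α (t + 1))
    (t := univ) fun A x ↦ x ∈ univ.inf A
  simpa only [bipartiteAbove, bipartiteBelow, filter_univ_mem, card_uniformTuples_mem_inf,
    sum_const, card_univ, smul_eq_mul] using h

theorem sum_card_inf_uniformTuples_le {s t : ℕ} (h_ratio : s * (t + 1) ≤ Fintype.card α)
    (h_card : Fintype.card α ≤ s ^ (Fintype.card ι + 1)) :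
    ∑ A ∈ uniformTuples ι α (t + 1), #(univ.inf A) ≤ #(uniformTuples ι α (t + 1)) * s := by
  rw [sum_card_inf_uniformTuples, card_uniformTuples]
  cases hN : Fintype.card α with
  | zero => simp
  | succ N =>
    rw [hN] at h_ratio h_card
    calc (N + 1) * N.choose t ^ Fintype.card ι
        ≤ s ^ (Fintype.card ι + 1) * N.choose t ^ Fintype.card ι := by gcongr
      _ = (s * N.choose t) ^ Fintype.card ι * s := by ring
      _ ≤ (N + 1).choose (t + 1) ^ Fintype.card ι * s := by
        gcongr
        exact mul_choose_le_choose_succ_succ h_ratio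

theorem card_filter_disjoint_powersetCard (B : Finset α) (t : ℕ) :
    #{a ∈ powersetCard t univ | Disjoint a B} = (Fintype.card α - #B).choose t := by
  rw [← card_compl, ← card_powersetCard]
  congr 1
  ext a
  simp [mem_powersetCard, subset_compl_iff_disjoint_right, and_comm]

theorem card_uniformTuples_fin_succ_inf_eq_empty (k t : ℕ) :
    #{A ∈ uniformTuples (Fin (k + 1)) α t | univ.inf A = ∅} =
      ∑ A ∈ uniformTuples (Fin k) α t, (Fintype.card α - #(univ.inf A)).choose t := by
  have h_cons (a : Finset α) (A : Fin k → Finset α) :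
      (Fin.cons a A : Fin (k + 1) → Finset α) ∈
        {A ∈ uniformTuples (Fin (k + 1)) α t | univ.inf A = ∅} ↔
        A ∈ uniformTuples (Fin k) α t ∧
          a ∈ ({a ∈ powersetCard t univ | Disjoint a (univ.inf A)} : Finset (Finset α)) := by
    simp only [Fin.univ_succ, cons_eq_insert, inf_insert, inf_map, Function.Embedding.coeFn_mk,
      Function.comp_def, inf_eq_inter', mem_filter, mem_uniformTuples, Fin.forall_fin_succ,
      Fin.cons_zero, Fin.cons_succ, disjoint_iff_inter_eq_empty, mem_powersetCard, subset_univ,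
      true_and]
    tauto
  simp_rw [← card_filter_disjoint_powersetCard]
  rw [← card_sigma]
  symm
  refine card_nbij' (fun p ↦ Fin.cons p.2 p.1) (fun A ↦ ⟨Fin.tail A, A 0⟩) ?_ ?_ ?_ ?_
  · exact fun p hp ↦ (h_cons p.2 p.1).2 (mem_sigma.1 hp)
  · intro A hA
    rw [← Fin.cons_self_tail A] at hA
    exact mem_sigma.2 ((h_cons _ _).1 hA)
  · exact fun _ _ ↦ rfl
  · exact fun A _ ↦ Fin.cons_self_tail A

theorem card_uniformTuples_mul_choose_sub_le {k s t : ℕ} (h_ratio : s * (t + 1) ≤ Fintype.card α)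
    (h_card : Fintype.card α ≤ s ^ (k + 1)) :
    #(uniformTuples (Fin k) α (t + 1)) * (Fintype.card α - s).choose (t + 1) ≤
      #{A ∈ uniformTuples (Fin (k + 1)) α (t + 1) | univ.inf A = ∅} := by
  rw [card_uniformTuples_fin_succ_inf_eq_empty]
  apply card_mul_choose_le_sum_choose
  have h_mean := sum_card_inf_uniformTuples_le (ι := Fin k) h_ratio (by simpa using h_card)
  have h_compl : ∑ A ∈ uniformTuples (Fin k) α (t + 1), (Fintype.card α - #(univ.inf A)) +
      ∑ A ∈ uniformTuples (Fin k) α (t + 1), #(univ.inf A) =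
        #(uniformTuples (Fin k) α (t + 1)) * Fintype.card α := by
    rw [← sum_add_distrib]
    exact sum_const_nat fun A _ ↦ Nat.sub_add_cancel (card_le_univ _)
  rw [Nat.mul_sub, ← h_compl]
  lia

theorem choose_pow_le_four_mul_card_uniformTuples_inf_eq_empty {k s t : ℕ} (hs : 2 ≤ s)
    (h_ratio : Fintype.card α + 1 = s * (t + 2)) (h_card : Fintype.card α ≤ s ^ (k + 1)) :
    (Fintype.card α).choose (t + 1) ^ (k + 1) ≤
      4 * #{A ∈ uniformTuples (Fin (k + 1)) α (t + 1) | univ.inf A = ∅} := by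
  obtain ⟨N, hN⟩ : ∃ N, Fintype.card α = N + s := Nat.exists_eq_add_of_le' (by nlinarith)
  have hNs : N + 1 = s * (t + 1) := by lia
  have h_jensen := card_uniformTuples_mul_choose_sub_le (α := α) (k := k) (t := t) (s := s)
    (by lia) h_card
  rw [card_uniformTuples, Fintype.card_fin] at h_jensen
  calc (Fintype.card α).choose (t + 1) ^ (k + 1)
      = (Fintype.card α).choose (t + 1) ^ k * (N + s).choose (t + 1) := by rw [pow_succ, hN]
    _ ≤ (Fintype.card α).choose (t + 1) ^ k * (4 * N.choose (t + 1)) := by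
      gcongr
      exact choose_add_le_four_mul_choose hs hNs
    _ = 4 * ((Fintype.card α).choose (t + 1) ^ k * (Fintype.card α - s).choose (t + 1)) := by
      rw [hN, Nat.add_sub_cancel]
      ring
    _ ≤ 4 * #{A ∈ uniformTuples (Fin (k + 1)) α (t + 1) | univ.inf A = ∅} := by gcongr

theorem card_uniformTuples_inf_eq_singleton (x : α) (t : ℕ) :
    #{A ∈ uniformTuples ι α (t + 1) | univ.inf A = {x}} =
      #{A ∈ uniformTuples ι {y // y ≠ x} t | univ.inf A = ∅} := by
  have h_mem (A : ι → Finset {y // y ≠ x}) :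
      (fun i ↦ addPoint x (A i)) ∈ {A ∈ uniformTuples ι α (t + 1) | univ.inf A = {x}} ↔
        A ∈ {A ∈ uniformTuples ι {y // y ≠ x} t | univ.inf A = ∅} := by
    simp [card_addPoint, inf_addPoint, ← addPoint_empty, (addPoint_injective x).eq_iff]
  symm
  refine card_nbij (fun A i ↦ addPoint x (A i)) (fun A hA ↦ (h_mem A).2 hA)
    (addPoint_injective x).comp_left.injOn fun A hA ↦ ?_
  have hx : ∀ i, x ∈ A i := by simpa [mem_inf] using (mem_filter.1 hA).2.ge
  choose B hB using fun i ↦ exists_addPoint_eq (hx i)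
  obtain rfl : (fun i ↦ addPoint x (B i)) = A := funext hB
  exact ⟨B, (h_mem B).1 hA, rfl⟩

theorem card_uniformTuples_card_inf_eq_one (t : ℕ) :
    #{A ∈ uniformTuples ι α (t + 1) | #(univ.inf A) = 1} =
      ∑ x : α, #{A ∈ uniformTuples ι {y // y ≠ x} t | univ.inf A = ∅} := by
  simp_rw [← card_uniformTuples_inf_eq_singleton]
  rw [← card_biUnion]
  · congr 1
    ext A
    simp [card_eq_one]
  · intro x _ y _ hxy
    exact disjoint_filter.2 fun A _ hx hy ↦ hxy (singleton_injective (hx.symm.trans hy))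

theorem choose_pow_le_four_mul_card_uniformTuples_card_inf_eq_one {k s : ℕ} (hk : 1 ≤ k)
    (hs : 2 ≤ s) (h_card : Fintype.card α = s ^ (k + 1)) :
    (Fintype.card α).choose (s ^ k) ^ (k + 1) ≤
      4 * #{A ∈ uniformTuples (Fin (k + 1)) α (s ^ k) | #(univ.inf A) = 1} := by
  obtain ⟨t, ht⟩ : ∃ t, s ^ k = t + 2 :=
    Nat.exists_eq_add_of_le' (hs.trans (Nat.le_self_pow (by lia) s))
  obtain ⟨N, hN⟩ : ∃ N, Fintype.card α = N + 1 :=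
    Nat.exists_eq_succ_of_ne_zero (by rw [h_card]; positivity)
  have h_ratio : N + 1 = s * (t + 2) := by rw [← hN, h_card, pow_succ', ht]
  have h_card_ne (x : α) : Fintype.card {y // y ≠ x} = N := by
    simp [hN]
  rw [ht, card_uniformTuples_card_inf_eq_one, mul_sum]
  calc (Fintype.card α).choose (t + 2) ^ (k + 1)
      = (s * N.choose (t + 1)) ^ (k + 1) := by rw [hN, choose_succ_succ_eq_mul_choose h_ratio]
    _ = ∑ _x : α, N.choose (t + 1) ^ (k + 1) := by
      rw [mul_pow, ← h_card, sum_const, card_univ, smul_eq_mul]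
    _ ≤ ∑ x : α, 4 * #{A ∈ uniformTuples (Fin (k + 1)) {y // y ≠ x} (t + 1) | univ.inf A = ∅} := by
      gcongr with x
      simpa only [h_card_ne] using
        choose_pow_le_four_mul_card_uniformTuples_inf_eq_empty (α := {y // y ≠ x}) (k := k) hs
          (by rw [h_card_ne, h_ratio]) (by rw [h_card_ne]; lia)

end UniformTuples

/-- There is a constant `c > 0` such that for all integers `k ≥ 2` and
`s ≥ 2`, setting `n = s^k` and `t = s^(k-1)`, the number of `k`-tuples `(A_1, …, A_k)` of
`t`-element subsets of `Fin n` whose common intersection has exactly one element is at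
least `c * C(n, t)^k`; equivalently, if the `A_i` are chosen independently and uniformly
at random among `t`-element subsets, the probability that `|A_1 ∩ ⋯ ∩ A_k| = 1` is at
least `c`. -/
theorem stmt_14 :
    ∃ c : ℝ, 0 < c ∧
      ∀ k s : ℕ, 2 ≤ k → 2 ≤ s →
        ∀ n t : ℕ, n = s ^ k → t = s ^ (k - 1) →
          ((Finset.univ.filter
              (fun A : Fin k → Finset (Fin n) =>
                (∀ i, (A i).card = t) ∧ (Finset.univ.inf A).card = 1)).card : ℝ) ≥
            c * ((Nat.choose n t : ℝ)) ^ k := by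
  refine ⟨1 / 4, by norm_num, fun k s hk hs n t hn ht ↦ ?_⟩
  obtain ⟨k, rfl⟩ := Nat.exists_eq_add_of_le' (one_le_two.trans hk)
  rw [Nat.add_sub_cancel] at ht
  subst hn ht
  have h := choose_pow_le_four_mul_card_uniformTuples_card_inf_eq_one (α := Fin (s ^ (k + 1)))
    (Nat.le_of_succ_le_succ hk) hs (Fintype.card_fin _)
  have h_filter : {A ∈ uniformTuples (Fin (k + 1)) (Fin (s ^ (k + 1))) (s ^ k) |
      #(univ.inf A) = 1} =
        ({A | (∀ i, #(A i) = s ^ k) ∧ #(univ.inf A) = 1} : Finset _) := by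
    ext A
    simp
  rw [h_filter, Fintype.card_fin] at h
  have h_real := (Nat.cast_le (α := ℝ)).2 h
  push_cast at h_real
  linarith
end
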